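/- Let X be a regular band. Then X is normal (z*x*y*z = z*y*x*z for all x, y, z) if and only if for all x, y ∈ X with y ≼ x there exists a unique y' ∈ X with y' ≤ x and y' D y. (The latter condition says that the semilattice reflection X → X/D is a covering of posets.) -/

import Mathlib

/-- The natural partial order on a band: `x ≤ y` iff `x = x*y` and `x = y*x`. -/
def bandLe {X : Type*} [Mul X] (x y : X) : Prop := x = x * y ∧ x = y * x

/-- The preorder `x ≼ y` iff `x = x*y*x` on a band. -/
def bandPreceq {X : Type*} [Mul X] (x y : X) : Prop := x = x * y * x

/-- Green's `D`-relation on a band. -/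
def bandD {X : Type*} [Mul X] (x y : X) : Prop := x = x * y * x ∧ y = y * x * y

/-!
In any band `≼` is a preorder for which products are greatest lower bounds: `u * y * v ≼ y`, and
`x ≼ y`, `x ≼ z` give `x ≼ y * z`. So the `D`-class of a product depends only on its set of
factors. In particular, if `y ≼ x` then `x * y * x` is an element below `x` in the `D`-class of
`y`, and only its uniqueness is at stake. Normality says that the elements below a given one
commute, and commuting `D`-related elements are equal. Conversely, `z * x * y * z` and
`z * y * x * z` are `D`-related elements below `z`, so uniqueness identifies them.
-/

section Band

variable {X : Type*} [Semigroup X] {a b u v x y z : X}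

theorem bandLe.commute (ha : bandLe a z) (hb : bandLe b z)
    (h : z * a * b * z = z * b * a * z) : Commute a b :=
  calc a * b = z * a * (b * z) := by rw [← ha.2, ← hb.1]
    _ = z * b * (a * z) := by rw [← mul_assoc, h, mul_assoc]
    _ = b * a := by rw [← hb.2, ← ha.1]

variable (idem : ∀ x : X, x * x = x)
include idem

theorem mul_right_eq_self_of_eq_mul (h : x = u * v) : x * v = x := by
  rw [h, mul_assoc, idem]

theorem mul_left_eq_self_of_eq_mul (h : x = u * v) : u * x = x := by
  rw [h, ← mul_assoc, idem]

theorem bandPreceq_of_eq_mul_mul (h : x = u * y * v) : bandPreceq x y := by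
  have hright : x * (y * v) = x := mul_right_eq_self_of_eq_mul idem (h.trans (mul_assoc u y v))
  have hleft : x = x * y * v := by rw [mul_assoc, hright]
  exact (mul_left_eq_self_of_eq_mul idem hleft).symm

theorem bandPreceq_refl (x : X) : bandPreceq x x := by
  rw [bandPreceq, idem, idem]

theorem bandPreceq.trans (hxy : bandPreceq x y) (hyz : bandPreceq y z) : bandPreceq x z := by
  have hx : x = x * y * z * (y * x) :=
    calc x = x * y * x := hxy
      _ = x * (y * z * y) * x := by rw [← hyz]
      _ = x * y * z * (y * x) := by simp only [mul_assoc]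
  exact bandPreceq_of_eq_mul_mul idem hx

theorem bandPreceq.mul (hxy : bandPreceq x y) (hxz : bandPreceq x z) : bandPreceq x (y * z) := by
  have hx : x = x * z * x * (y * z) * (x * y * x) :=
    calc x = x * z * x * y * x := by rw [← hxz, ← hxy]
      _ = x * (z * x * y) * x := by simp only [mul_assoc]
      _ = x * (z * x * y * (z * x * y)) * x := by rw [idem]
      _ = x * z * x * (y * z) * (x * y * x) := by simp only [mul_assoc]
  exact bandPreceq_of_eq_mul_mul idem hx

theorem bandLe.bandPreceq (h : bandLe x y) : bandPreceq x y :=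
  calc x = x * x := (idem x).symm
    _ = x * y * x := by rw [← h.1]

theorem bandD.trans (hxy : bandD x y) (hyz : bandD y z) : bandD x z :=
  ⟨bandPreceq.trans idem hxy.1 hyz.1, bandPreceq.trans idem hyz.2 hxy.2⟩

theorem bandD.eq_of_commute (h : bandD x y) (hcomm : Commute x y) : x = y :=
  calc x = x * y * x := h.1
    _ = y * x := by rw [hcomm.eq, mul_assoc, idem]
    _ = y * x * y := by rw [mul_assoc, hcomm.eq, ← mul_assoc, idem]
    _ = y := h.2.symm

theorem bandLe_mul_mul (x z : X) : bandLe (z * x * z) z :=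
  ⟨by rw [mul_assoc _ z z, idem], by rw [← mul_assoc, ← mul_assoc, idem]⟩

theorem bandLe_mul_mul_mul (x y z : X) : bandLe (z * x * y * z) z := by
  simpa only [mul_assoc] using bandLe_mul_mul idem (x * y) z

theorem bandPreceq.bandD_mul_mul (h : bandPreceq y x) : bandD (x * y * x) y :=
  ⟨bandPreceq_of_eq_mul_mul idem rfl, (h.mul idem (bandPreceq_refl idem y)).mul idem h⟩

theorem bandPreceq_mul_mul_mul_swap (x y z : X) :
    bandPreceq (z * x * y * z) (z * y * x * z) := by
  have hz : bandPreceq (z * x * y * z) z := (bandLe_mul_mul_mul idem x y z).bandPreceq idem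
  have hy : bandPreceq (z * x * y * z) y := bandPreceq_of_eq_mul_mul idem rfl
  have hx : bandPreceq (z * x * y * z) x := bandPreceq_of_eq_mul_mul idem (mul_assoc (z * x) y z)
  exact ((hz.mul idem hy).mul idem hx).mul idem hz

theorem bandD_mul_mul_mul_swap (x y z : X) : bandD (z * x * y * z) (z * y * x * z) :=
  ⟨bandPreceq_mul_mul_mul_swap idem x y z, bandPreceq_mul_mul_mul_swap idem y x z⟩

end Band

theorem regular_band_normal_iff_covering_general {X : Type*} [Semigroup X]
    (idem : ∀ x : X, x * x = x) :
    (∀ x y z : X, z * x * y * z = z * y * x * z) ↔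
    (∀ x y : X, bandPreceq y x → ∃! y' : X, bandLe y' x ∧ bandD y' y) := by
  constructor
  · intro normal x y hyx
    have hle : bandLe (x * y * x) x := bandLe_mul_mul idem y x
    have hD : bandD (x * y * x) y := hyx.bandD_mul_mul idem
    refine ⟨x * y * x, ⟨hle, hD⟩, fun w ⟨hwx, hwy⟩ => ?_⟩
    have hcomm : Commute w (x * y * x) := hwx.commute hle (normal _ _ _)
    exact (hwy.trans idem hD.symm).eq_of_commute idem hcomm
  · intro covering x y z
    have hle : bandLe (z * y * x * z) z := bandLe_mul_mul_mul idem y x z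
    have hrefl : bandPreceq (z * y * x * z) (z * y * x * z) := bandPreceq_refl idem _
    exact (covering z _ (hle.bandPreceq idem)).unique
      ⟨bandLe_mul_mul_mul idem x y z, bandD_mul_mul_mul_swap idem x y z⟩ ⟨hle, hrefl, hrefl⟩

/-- A regular band is normal iff the semilattice reflection
`X → X/D` is a covering of posets: for all `x, y` with `y ≼ x` there is a unique
`y' ≤ x` with `y' D y`. -/
theorem regular_band_normal_iff_covering {X : Type*} [Semigroup X]
    (idem : ∀ x : X, x * x = x)
    (reg : ∀ x y z : X, z * x * z * y * z = z * x * y * z) :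
    (∀ x y z : X, z * x * y * z = z * y * x * z) ↔
    (∀ x y : X, bandPreceq y x → ∃! y' : X, bandLe y' x ∧ bandD y' y) :=
  regular_band_normal_iff_covering_general idem
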